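/- Let q₁,q₂,q₃ ∈ ℝ[t] be polynomials such that every common divisor of q₁,q₂,q₃ is a unit, and let n = max(deg q₁, deg q₂, deg q₃). Let α,β,γ,δ ∈ ℝ with αδ−βγ ≠ 0, and let ψ = (αt+β)/(γt+δ) ∈ ℝ(t). Let Q be a real 3×3 matrix, and let A,B ∈ ℝ[t] be coprime polynomials with B ≠ 0 such that for each i ∈ {1,2,3}, Qᵢ₁·q₁(t) + Qᵢ₂·q₂(t) + Qᵢ₃·q₃(t) = (A(t)/B(t))·qᵢ(ψ) holds in ℝ(t). Then B(t) is a unit in ℝ[t], i.e. a nonzero constant. -/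

import Mathlib

open Polynomial

/-- Evaluating at a quotient versus the homogenized polynomial. -/
lemma hom_eval {K : Type*} [Field K] [Algebra ℝ K] (p : ℝ[X]) (n : ℕ) (hp : p.natDegree ≤ n)
    (a b : K) (hb : b ≠ 0) :
    ∑ k ∈ Finset.range (n + 1), algebraMap ℝ K (p.coeff k) * a ^ k * b ^ (n - k) =
      b ^ n * aeval (a / b) p := by
  rw [aeval_eq_sum_range' (Nat.lt_succ_of_le hp), Finset.mul_sum]
  refine Finset.sum_congr rfl fun k hk => ?_
  have hk' : k ≤ n := Nat.lt_succ_iff.mp (Finset.mem_range.mp hk)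
  obtain ⟨m, rfl⟩ := Nat.exists_eq_add_of_le hk'
  rw [Algebra.smul_def, Nat.add_sub_cancel_left, div_pow, pow_add]
  field_simp

/-- Lemma 5 (Bt): `B(t)` is a (nonzero) constant, i.e. a unit of `ℝ[X]`. -/
theorem stmt_2 (q : Fin 3 → ℝ[X])
    (hgcd : ∀ d : ℝ[X], (∀ i, d ∣ q i) → IsUnit d)
    (n : ℕ) (hn : n = max (max (q 0).natDegree (q 1).natDegree) (q 2).natDegree)
    (α β γ δ : ℝ) (hm : α * δ - β * γ ≠ 0)
    (ψ : RatFunc ℝ)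
    (hψ : ψ = algebraMap ℝ[X] (RatFunc ℝ) (C α * X + C β) /
              algebraMap ℝ[X] (RatFunc ℝ) (C γ * X + C δ))
    (Q : Matrix (Fin 3) (Fin 3) ℝ)
    (A B : ℝ[X]) (hAB : IsCoprime A B) (hB : B ≠ 0)
    (heq : ∀ i, algebraMap ℝ[X] (RatFunc ℝ) (∑ j, C (Q i j) * q j) =
        (algebraMap ℝ[X] (RatFunc ℝ) A / algebraMap ℝ[X] (RatFunc ℝ) B) *
          Polynomial.aeval ψ (q i)) :
    IsUnit B := by
  have hle : ∀ i, (q i).natDegree ≤ n := by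
    intro i
    fin_cases i <;> simp [hn]
  have hD : (C γ * X + C δ : ℝ[X]) ≠ 0 := by
    intro h
    have h1 := congrArg (fun p => coeff p 1) h
    have h0 := congrArg (fun p => coeff p 0) h
    simp at h1 h0
    apply hm
    simp [h1, h0]
  set N : ℝ[X] := C α * X + C β with hN
  set D : ℝ[X] := C γ * X + C δ with hDdef
  have hinj : Function.Injective (algebraMap ℝ[X] (RatFunc ℝ)) :=
    IsFractionRing.injective ℝ[X] (RatFunc ℝ)
  have hD' : algebraMap ℝ[X] (RatFunc ℝ) D ≠ 0 := by
    simpa using hD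
  have hB' : algebraMap ℝ[X] (RatFunc ℝ) B ≠ 0 := by
    simpa using hB
  let H : Fin 3 → ℝ[X] := fun i =>
    ∑ k ∈ Finset.range (n + 1), C ((q i).coeff k) * N ^ k * D ^ (n - k)
  have hH : ∀ i, B ∣ H i := by
    intro i
    have h1 : algebraMap ℝ[X] (RatFunc ℝ) (H i) =
        algebraMap ℝ[X] (RatFunc ℝ) D ^ n * aeval ψ (q i) := by
      rw [hψ, ← hom_eval (q i) n (hle i) _ _ hD']
      simp only [H, map_sum, map_mul, map_pow]
      refine Finset.sum_congr rfl fun k _ => ?_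
      rw [IsScalarTower.algebraMap_apply ℝ ℝ[X] (RatFunc ℝ), Polynomial.algebraMap_eq]
    have h2 : A * H i = B * (D ^ n * ∑ j, C (Q i j) * q j) := by
      apply hinj
      rw [map_mul, map_mul, map_mul, heq i, h1, map_pow]
      field_simp
    exact hAB.symm.dvd_of_dvd_mul_left ⟨_, h2⟩
  by_contra hu
  have hdeg : B.degree ≠ 0 := fun h => hu (isUnit_iff_degree_eq_zero.mpr h)
  obtain ⟨z, hz⟩ := IsAlgClosed.exists_aeval_eq_zero ℂ B hdeg
  have hHz : ∀ i, ∑ k ∈ Finset.range (n + 1),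
      algebraMap ℝ ℂ ((q i).coeff k) * (aeval z N) ^ k * (aeval z D) ^ (n - k) = 0 := by
    intro i
    obtain ⟨c, hc⟩ := hH i
    have h := congrArg (aeval z) hc
    rw [map_mul, hz, zero_mul] at h
    simpa only [H, map_sum, map_mul, map_pow, aeval_C] using h
  by_cases hDz : aeval z D = 0
  · have hNz : aeval z N ≠ 0 := by
      intro hNz
      have h : C (α * δ - β * γ) = C α * D - C γ * N := by
        simp only [hN, hDdef, C_sub, C_mul]; ring
      have h' := congrArg (aeval z) h
      rw [aeval_C, map_sub (aeval (R := ℝ) z), map_mul (aeval (R := ℝ) z), map_mul (aeval (R := ℝ) z), hDz, hNz] at h'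
      simp only [mul_zero, sub_zero] at h'
      exact hm ((map_eq_zero (algebraMap ℝ ℂ)).mp h')
    have hc : ∀ i, (q i).coeff n = 0 := by
      intro i
      have h := hHz i
      rw [Finset.sum_range_succ, Finset.sum_eq_zero, hDz] at h
      · simpa [hNz] using h
      · intro k hk
        have : n - k ≠ 0 := by have := Finset.mem_range.mp hk; omega
        rw [hDz, zero_pow this, mul_zero]
    have hex : ∃ i, (q i).natDegree = n := by
      rcases max_choice (max (q 0).natDegree (q 1).natDegree) (q 2).natDegree with h | h
      · rcases max_choice (q 0).natDegree (q 1).natDegree with h' | h'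
        · exact ⟨0, by rw [hn, h, h']⟩
        · exact ⟨1, by rw [hn, h, h']⟩
      · exact ⟨2, by rw [hn, h]⟩
    obtain ⟨i, hi⟩ := hex
    have hqi : q i = 0 := by
      have := hc i
      rw [← hi] at this
      exact leadingCoeff_eq_zero.mp this
    have hn0 : n = 0 := by rw [← hi, hqi, natDegree_zero]
    have hall : ∀ j, q j = 0 := by
      intro j
      have hj : (q j).natDegree = n := by have := hle j; omega
      have := hc j
      rw [← hj] at this
      exact leadingCoeff_eq_zero.mp this
    exact not_isUnit_zero (hgcd 0 fun j => by rw [hall j])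
  · have hw : ∀ i, aeval (aeval z N / aeval z D) (q i) = 0 := by
      intro i
      have h := hHz i
      rw [hom_eval (q i) n (hle i) _ _ hDz] at h
      exact (mul_eq_zero.mp h).resolve_left (pow_ne_zero _ hDz)
    exact minpoly.not_isUnit ℝ (aeval z N / aeval z D)
      (hgcd _ fun i => minpoly.dvd ℝ _ (hw i))
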